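/- (Theorem 10, lower bound by the zero-one risk.) For every integer n ≥ 0 and every η ∈ [0,1], C_{Poly-n}(η) ≥ min(η, 1−η). -/

import Mathlib

/-!
The function `F = Fpoly n` satisfies `F'' = -(x (1 - x)) ^ n`, which is negative on `(0, 1)`, so `F`
is strictly concave on `[0, 1]`. Its derivative `Q - Q (1/2)` is odd about `1/2` because the
integrand `(t (1 - t)) ^ n` is symmetric about `1/2`; hence
`F 1 = F 0 = 0`. Strict concavity then
gives `F (1/2) > 0`, and the normalised function `CPoly n` is concave, vanishes at `0` and `1`, and
takes the value `1/2` at `1/2`. It therefore lies above its chords over `[0, 1/2]` and `[1/2, 1]`,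
which form the graph of `min η (1 - η)`.
-/

open Set MeasureTheory

/-- `Q_n(η) = −∫₀^η (t(1−t))ⁿ dt`. -/
noncomputable def Qpoly (n : ℕ) (η : ℝ) : ℝ := -∫ t in (0:ℝ)..η, (t * (1 - t))^n

/-- `K1_n = −Q_n(1/2)`. -/
noncomputable def K1poly (n : ℕ) : ℝ := -Qpoly n (1/2)

/-- `F_n(η) = ∫₀^η Q_n(s) ds + K1_n·η`. -/
noncomputable def Fpoly (n : ℕ) (η : ℝ) : ℝ := (∫ s in (0:ℝ)..η, Qpoly n s) + K1poly n * η

/-- `K2_n = (1/2)/F_n(1/2)`. -/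
noncomputable def K2poly (n : ℕ) : ℝ := (1/2) / Fpoly n (1/2)

/-- The polynomial minimum conditional risk function `C_{Poly-n}(η) = K2_n·F_n(η)`. -/
noncomputable def CPoly (n : ℕ) (η : ℝ) : ℝ := K2poly n * Fpoly n η

lemma qpoly_hasDerivAt (n : ℕ) (x : ℝ) : HasDerivAt (Qpoly n) (-(x * (1 - x)) ^ n) x := by
  have hc : Continuous fun t : ℝ => (t * (1 - t)) ^ n := by fun_prop
  exact (hc.integral_hasStrictDerivAt 0 x).hasDerivAt.neg

lemma qpoly_continuous (n : ℕ) : Continuous (Qpoly n) :=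
  continuous_iff_continuousAt.2 fun x => (qpoly_hasDerivAt n x).continuousAt

lemma fpoly_hasDerivAt (n : ℕ) (x : ℝ) : HasDerivAt (Fpoly n) (Qpoly n x + K1poly n) x := by
  have h := ((qpoly_continuous n).integral_hasStrictDerivAt 0 x).hasDerivAt.add
    ((hasDerivAt_id x).const_mul (K1poly n))
  rw [mul_one] at h
  exact h

lemma fpoly_strictConcaveOn (n : ℕ) : StrictConcaveOn ℝ (Icc 0 1) (Fpoly n) := by
  refine strictConcaveOn_of_deriv2_neg (convex_Icc 0 1)
    (fun x _ => (fpoly_hasDerivAt n x).continuousAt.continuousWithinAt) fun x hx => ?_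
  rw [interior_Icc] at hx
  have hd : deriv (Fpoly n) = fun x => Qpoly n x + K1poly n :=
    funext fun y => (fpoly_hasDerivAt n y).deriv
  have hd2 : deriv^[2] (Fpoly n) x = -(x * (1 - x)) ^ n := by
    simp only [Function.iterate_succ, Function.iterate_zero, Function.comp_apply, id, hd]
    exact ((qpoly_hasDerivAt n x).add_const _).deriv
  rw [hd2, neg_lt_zero]
  exact pow_pos (mul_pos hx.1 (sub_pos.2 hx.2)) n

lemma qpoly_add_qpoly_one_sub (n : ℕ) (s : ℝ) : Qpoly n s + Qpoly n (1 - s) = Qpoly n 1 := by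
  have hc : Continuous fun t : ℝ => (t * (1 - t)) ^ n := by fun_prop
  have hsub : ∫ t in (0:ℝ)..(1 - s), (t * (1 - t)) ^ n = ∫ t in s..1, (t * (1 - t)) ^ n := by
    have h := intervalIntegral.integral_comp_sub_left
      (fun t : ℝ => (t * (1 - t)) ^ n) (1 : ℝ) (a := s) (b := 1)
    rw [sub_self] at h
    rw [← h]
    congr 1 with t
    ring
  have hadd := intervalIntegral.integral_add_adjacent_intervals
    (hc.intervalIntegrable (μ := volume) 0 s) (hc.intervalIntegrable s 1)
  unfold Qpoly
  rw [hsub, ← hadd]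
  ring

lemma fpoly_zero (n : ℕ) : Fpoly n 0 = 0 := by simp [Fpoly]

lemma fpoly_one (n : ℕ) : Fpoly n 1 = 0 := by
  have hhalf : 2 * Qpoly n (1 / 2) = Qpoly n 1 := by
    rw [← qpoly_add_qpoly_one_sub n (1 / 2)]
    norm_num
    ring
  have hrefl : ∫ s in (0:ℝ)..1, Qpoly n (1 - s) = ∫ s in (0:ℝ)..1, Qpoly n s := by
    simp [intervalIntegral.integral_comp_sub_left (Qpoly n)]
  have hodd : ∫ s in (0:ℝ)..1, Qpoly n (1 - s)
      = Qpoly n 1 - ∫ s in (0:ℝ)..1, Qpoly n s := by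
    have h : ∀ s, Qpoly n (1 - s) = Qpoly n 1 - Qpoly n s := fun s => by
      linarith [qpoly_add_qpoly_one_sub n s]
    simp only [h]
    rw [intervalIntegral.integral_sub intervalIntegrable_const
      ((qpoly_continuous n).intervalIntegrable 0 1)]
    simp
  unfold Fpoly K1poly
  linarith

lemma fpoly_half_pos (n : ℕ) : 0 < Fpoly n (1 / 2) := by
  have h := (fpoly_strictConcaveOn n).2 (left_mem_Icc.2 zero_le_one) (right_mem_Icc.2 zero_le_one)
    zero_ne_one (one_half_pos (α := ℝ)) one_half_pos (add_halves 1)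
  simpa [fpoly_zero, fpoly_one] using h

/-- (Theorem 10, lower bound by the zero-one risk.) `C_{Poly-n}(η) ≥ min(η, 1−η)` for all
`η ∈ [0,1]`. -/
theorem cpoly_ge_min (n : ℕ) : ∀ η ∈ Icc (0:ℝ) 1, CPoly n η ≥ min η (1 - η) := by
  intro η ⟨h0, h1⟩
  have hpos := fpoly_half_pos n
  have hmid : (1 / 2 : ℝ) ∈ Icc (0:ℝ) 1 := by constructor <;> norm_num
  have hconc := (fpoly_strictConcaveOn n).concaveOn.2
  suffices h : 2 * min η (1 - η) * Fpoly n (1 / 2) ≤ Fpoly n η by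
    unfold CPoly K2poly
    rw [ge_iff_le, div_mul_eq_mul_div, le_div_iff₀ hpos]
    linarith
  rcases le_total η (1 / 2) with h | h
  · rw [min_eq_left (by linarith)]
    -- `η` is the convex combination `(1 - 2η) • 0 + 2η • (1/2)`.
    have := hconc (x := 0) (y := 1 / 2) (by simp) hmid
      (a := 1 - 2 * η) (b := 2 * η) (by linarith) (by linarith) (by ring)
    simp only [smul_eq_mul, fpoly_zero] at this
    rw [show (1 - 2 * η) * 0 + 2 * η * (1 / 2) = η by ring] at this
    linarith
  · rw [min_eq_right (by linarith)]
    -- `η` is the convex combination `(2η - 1) • 1 + 2(1 - η) • (1/2)`.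
    have := hconc (x := 1) (y := 1 / 2) (by simp) hmid
      (a := 2 * η - 1) (b := 2 * (1 - η)) (by linarith) (by linarith) (by ring)
    simp only [smul_eq_mul, fpoly_one] at this
    rw [show (2 * η - 1) * 1 + 2 * (1 - η) * (1 / 2) = η by ring] at this
    linarith
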